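/- Fix integers g ≥ 1 and r, d ≥ 0, a nondecreasing tuple α ∈ ℤ_{≥0}^{r+1}, and a nonincreasing tuple β ∈ ℤ_{≥0}^{r+1} with ρ(g,r,d,α,β) = 1, and let (α^1,…,α^{g+1}) be a valid sequence for the data (g,r,d,α,β). Then there is exactly one index j ∈ {1,…,g} such that α^{j+1} − α^j = 1̲ + e_a − e_b for some indices a, b ∈ {0,…,r}, and for every other index i ∈ {1,…,g} with i ≠ j one has α^{i+1} − α^i = 1̲ − e_b for some b ∈ {0,…,r}. -/

import Mathlib

open scoped BigOperators

namespace BNpaper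

def ValidSeq (g r d : ℕ) (al be : Fin (r + 1) → ℤ) (A : ℕ → Fin (r + 1) → ℤ) : Prop :=
  (∀ i, 1 ≤ i → i ≤ g + 1 → (∀ t, 0 ≤ A i t) ∧ Monotone (A i)) ∧
  A 1 = al ∧
  (A (g + 1) = fun t => (d : ℤ) - (r : ℤ) - be t) ∧
  (∀ i, 1 ≤ i → i ≤ g → ∃ a : Fin (r + 1), ∀ t,
    (if t = a then (0 : ℤ) else 1) ≤ A (i + 1) t - A i t)

def rhoBN (g r d : ℕ) (al be : Fin (r + 1) → ℤ) : ℤ :=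
  (g : ℤ) - ((r : ℤ) + 1) * ((g : ℤ) - d + r) - (∑ t, al t) - (∑ t, be t)

theorem ind_aux {ι : Type*} [DecidableEq ι] (s : Finset ι) (h : ι → ℤ) (h0 : ∀ i ∈ s, 0 ≤ h i)
    (h1 : ∑ i ∈ s, h i = 1) : ∃ j ∈ s, h j = 1 ∧ ∀ i ∈ s, i ≠ j → h i = 0 := by
  have hex : ∃ j ∈ s, h j ≠ 0 := by
    by_contra hc
    push Not at hc
    rw [Finset.sum_eq_zero hc] at h1
    omega
  obtain ⟨j, hj, hne⟩ := hex
  have hs := Finset.add_sum_erase s h hj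
  have hnn : ∀ i ∈ s.erase j, 0 ≤ h i := fun i hi => h0 i (Finset.mem_of_mem_erase hi)
  have hn := Finset.sum_nonneg hnn
  have hj0 := h0 j hj
  have hz : ∑ i ∈ s.erase j, h i = 0 := by omega
  refine ⟨j, hj, by omega, fun i hi hij => ?_⟩
  exact (Finset.sum_eq_zero_iff_of_nonneg hnn).1 hz i (Finset.mem_erase.2 ⟨hij, hi⟩)

theorem sum_ne_aux (r : ℕ) (a : Fin (r + 1)) :
    ∑ t : Fin (r + 1), (if t = a then (0 : ℤ) else 1) = r := by
  have : ∀ t : Fin (r + 1), (if t = a then (0 : ℤ) else 1) = 1 - (if t = a then 1 else 0) := by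
    intro t; split_ifs <;> rfl
  simp [this, Finset.sum_sub_distrib]

theorem stmt19 (g r d : ℕ) (hg : 1 ≤ g)
    (al be : Fin (r + 1) → ℤ) (hal0 : ∀ t, 0 ≤ al t) (halmono : Monotone al)
    (hbe0 : ∀ t, 0 ≤ be t) (hbeanti : Antitone be)
    (hrho : rhoBN g r d al be = 1)
    (A : ℕ → Fin (r + 1) → ℤ) (hA : ValidSeq g r d al be A) :
    ∃ j, 1 ≤ j ∧ j ≤ g ∧
      (∃ a b : Fin (r + 1), ∀ t, A (j + 1) t - A j t
          = 1 + (if t = a then 1 else 0) - (if t = b then 1 else 0)) ∧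
      (∀ j', 1 ≤ j' → j' ≤ g →
        (∃ a b : Fin (r + 1), ∀ t, A (j' + 1) t - A j' t
            = 1 + (if t = a then 1 else 0) - (if t = b then 1 else 0)) → j' = j) ∧
      (∀ i, 1 ≤ i → i ≤ g → i ≠ j →
        ∃ b : Fin (r + 1), ∀ t, A (i + 1) t - A i t = 1 - (if t = b then 1 else 0)) := by
  obtain ⟨-, hA1, hAg, hstep⟩ := hA
  unfold rhoBN at hrho
  have htel : ∑ i ∈ Finset.range g, (∑ t, (A (i + 1 + 1) t - A (i + 1) t) - (r : ℤ)) = 1 := by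
    rw [Finset.sum_sub_distrib]
    have h2 : ∑ i ∈ Finset.range g, ∑ t, (A (i + 1 + 1) t - A (i + 1) t)
        = ∑ t, A (g + 1) t - ∑ t, A 1 t := by
      simp only [Finset.sum_sub_distrib (s := Finset.univ)]
      exact Finset.sum_range_sub (fun i => ∑ t, A (i + 1) t) g
    rw [h2, hAg, hA1]
    simp only [Finset.sum_sub_distrib, Finset.sum_const, Finset.card_univ, Fintype.card_fin,
      Finset.card_range, nsmul_eq_mul]
    push_cast
    linarith
  have hkey : ∀ i, 1 ≤ i → i ≤ g → ∃ a : Fin (r + 1),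
      (∀ t, 0 ≤ A (i + 1) t - A i t - (if t = a then (0 : ℤ) else 1)) ∧
      ∑ t, (A (i + 1) t - A i t - (if t = a then (0 : ℤ) else 1))
        = ∑ t, (A (i + 1) t - A i t) - (r : ℤ) := by
    intro i h1 h2
    obtain ⟨a, ha⟩ := hstep i h1 h2
    refine ⟨a, fun t => sub_nonneg.2 (ha t), ?_⟩
    rw [Finset.sum_sub_distrib, sum_ne_aux]
  obtain ⟨j, hj, hj1, hj0⟩ := ind_aux _ _ (by
    intro i hi
    have hi := Finset.mem_range.1 hi
    obtain ⟨a, ha, hs⟩ := hkey (i + 1) (by omega) (by omega)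
    rw [← hs]
    exact Finset.sum_nonneg fun t _ => ha t) htel
  have hj := Finset.mem_range.1 hj
  refine ⟨j + 1, by omega, by omega, ?_, ?_, ?_⟩
  · obtain ⟨b, hb, hs⟩ := hkey (j + 1) (by omega) (by omega)
    rw [hj1] at hs
    obtain ⟨a, -, ha1, ha0⟩ := ind_aux _ _ (fun t _ => hb t) hs
    refine ⟨a, b, fun t => ?_⟩
    by_cases hta : t = a
    · subst hta
      split_ifs at * <;> simp_all <;> omega
    · have := ha0 t (Finset.mem_univ _) hta
      split_ifs at * <;> omega
  · rintro j' h1 h2 ⟨a, b, hab⟩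
    by_contra hne
    have := hj0 (j' - 1) (Finset.mem_range.2 (by omega)) (by omega)
    rw [show j' - 1 + 1 = j' by omega] at this
    simp only [hab, Finset.sum_sub_distrib, Finset.sum_add_distrib] at this
    simp at this
  · intro i h1 h2 hne
    have h := hj0 (i - 1) (Finset.mem_range.2 (by omega)) (by omega)
    rw [show i - 1 + 1 = i by omega] at h
    obtain ⟨b, hb, hs⟩ := hkey i h1 h2
    rw [h] at hs
    refine ⟨b, fun t => ?_⟩
    have := (Finset.sum_eq_zero_iff_of_nonneg (fun t _ => hb t)).1 hs t (Finset.mem_univ _)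
    split_ifs at * <;> omega

end BNpaper
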